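/- arXiv:1902.02152 — 2 statements merged into one kernel-verified Lean document; each statement's English description precedes it below -/
import Mathlib

section
/- Let J be a finite group, f : F → J a surjective homomorphism with kernel K, and let m = d_F(K;ℤ) be the minimal number of elements of K whose images generate the abelianization K^{ab} as a module over J = F/K (acting via conjugation in F). Let G be a group fitting in an extension 1 → A → G → J → 1 where A is a nontrivial free abelian group. Then for every function ρ : ℕ → ℕ with ρ(l) ≥ m for all l, the probability that there exists a surjective homomorphism φ : G_R ↠ G carrying f, for R chosen uniformly in S_l^{ρ(l)}, tends to 0 as l → ∞. -/
open Filter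

/-- The type of reduced words of length `l` in the alphabet `X ∪ X⁻¹`, where
`X = {x_1, …, x_n}`; a word is a list of letters `(i, b)`, the letter being `x_i` if
`b = true` and `x_i⁻¹` if `b = false`, and it is reduced if it equals its free reduction. -/
def ReducedWord (n l : ℕ) : Type :=
  {w : List (Fin n × Bool) // FreeGroup.reduce w = w ∧ w.length = l}

/-- The probability, for a tuple `R` of `k` relators chosen uniformly and independently among
the reduced words of length `l`, that the predicate `P` holds of the corresponding tuple of
elements of the free group on `n` generators. -/
noncomputable def wordProb (n l k : ℕ) (P : (Fin k → FreeGroup (Fin n)) → Prop) : ℝ :=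
  (Nat.card {R : Fin k → ReducedWord n l // P fun i => FreeGroup.mk (R i).1} : ℝ) /
    (Nat.card (ReducedWord n l) : ℝ) ^ k

/-- A tuple of elements of `K = ker f ⊴ F` generates the abelianisation `K^{ab}` as a module
over `J = F/K` (acting by conjugation) exactly when the normal closure in `F` of these
elements, together with the commutator subgroup `[K,K]`, is all of `K`. -/
def GeneratesRelModule {F J : Type*} [Group F] [Group J] (f : F →* J)
    {k : ℕ} (v : Fin k → F) : Prop :=
  (∀ i, v i ∈ f.ker) ∧
    Subgroup.normalClosure (Set.range v) ⊔ ⁅(f.ker : Subgroup F), (f.ker : Subgroup F)⁆ = f.ker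

/-!
A surjection `φ : G_R ↠ G` carrying `f` exists only if the relators lie in `K` and the quotient of
`K` by `⟪R⟫[K, K]` maps onto `A`, hence is an infinite finitely generated abelian group. Such a
group is not `p`-divisible for any prime `p`, so `R` fails to normally generate `K` modulo
`[K, K]K ^ p`.

Fix `p`. Random reduced words of large length are distributed in the finite group
`Q = F / [K, K]K ^ p` with all probabilities at most `c / |Q|`, where `c` does not depend on `p`,
because the non-backtracking walk on `Q` has a doubly stochastic transition matrix. So it suffices
to bound the number of `m`-tuples in `B = K / [K, K]K ^ p` that do not generate `B` as a module
over `𝔽_p[F]`. Some `m`-tuple `v₀` generates, and on each line `v + 𝔽_p v₀` the non-generating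
tuples correspond to eigenvalues of an endomorphism of `B`; there are at most `dim B ≤ rank K` of
them. Thus the proportion of non-generating tuples is at most `rank K / p`, and `p` is arbitrary.
-/

section DoublyStochastic

open Matrix

variable {X : Type*} [Fintype X]

lemma exists_mem_le_sum_div {f : X → ℝ} (hf : ∀ x, 0 ≤ f x) {S : Finset X} {s : ℝ} (hs : 0 < s)
    (hS : s ≤ S.card) : ∃ y ∈ S, f y ≤ (∑ x, f x) / s := by
  have hne : S.Nonempty := Finset.card_pos.1 (by exact_mod_cast hs.trans_le hS)
  refine Finset.exists_le_of_sum_le hne ?_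
  calc ∑ y ∈ S, f y ≤ ∑ x, f x := Finset.sum_le_univ_sum_of_nonneg hf
    _ = s * ((∑ x, f x) / s) := by rw [mul_div_cancel₀ _ hs.ne']
    _ ≤ S.card * ((∑ x, f x) / s) :=
        mul_le_mul_of_nonneg_right hS (div_nonneg (Finset.sum_nonneg fun x _ => hf x) hs.le)
    _ = ∑ _y ∈ S, (∑ x, f x) / s := by rw [Finset.sum_const, nsmul_eq_mul]

variable [DecidableEq X] {M : Matrix X X ℝ}

lemma mulVec_apply_le_of_forall_le (hM : M ∈ rowStochastic ℝ X) {f : X → ℝ} {C : ℝ}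
    (hf : ∀ x, f x ≤ C) (x : X) : (M *ᵥ f) x ≤ C :=
  calc (M *ᵥ f) x ≤ ∑ y, M x y * C := Finset.sum_le_sum fun y _ =>
        mul_le_mul_of_nonneg_left (hf y) (nonneg_of_mem_rowStochastic hM)
    _ = C := by rw [← Finset.sum_mul, sum_row_of_mem_rowStochastic hM, one_mul]

lemma mulVec_apply_le_sub (hM : M ∈ rowStochastic ℝ X) {ε : ℝ} (hε₀ : 0 ≤ ε)
    (hε : ∀ x y, M x y ≠ 0 → ε ≤ M x y) {s : ℝ} (hs : 0 < s)
    (hsupp : ∀ x, s ≤ (Finset.univ.filter fun y => M x y ≠ 0).card) {f : X → ℝ}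
    (hf : ∀ x, 0 ≤ f x) {C : ℝ} (hC : ∀ x, f x ≤ C) (x : X) :
    (M *ᵥ f) x ≤ C - ε * (C - (∑ y, f y) / s) := by
  obtain ⟨y, hy, hfy⟩ := exists_mem_le_sum_div hf hs (hsupp x)
  have hgap : C - (M *ᵥ f) x = ∑ y, M x y * (C - f y) := by
    simp only [mul_sub, Finset.sum_sub_distrib, ← Finset.sum_mul, sum_row_of_mem_rowStochastic hM,
      one_mul, mulVec, dotProduct]
  have hle : ε * (C - (∑ y, f y) / s) ≤ C - (M *ᵥ f) x :=
    calc ε * (C - (∑ y, f y) / s) ≤ ε * (C - f y) := by gcongr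
      _ ≤ M x y * (C - f y) :=
          mul_le_mul_of_nonneg_right (hε x y (Finset.mem_filter.1 hy).2) (sub_nonneg.2 (hC y))
      _ ≤ ∑ y, M x y * (C - f y) := Finset.single_le_sum (f := fun y => M x y * (C - f y))
          (fun y _ => mul_nonneg (nonneg_of_mem_rowStochastic hM) (sub_nonneg.2 (hC y)))
          (Finset.mem_univ y)
      _ = C - (M *ᵥ f) x := hgap.symm
  linarith

lemma exists_pos_le_of_ne_zero {Y : Type*} [Finite Y] {a : Y → ℝ} (ha : ∀ y, 0 ≤ a y) :
    ∃ ε > 0, ∀ y, a y ≠ 0 → ε ≤ a y := by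
  cases isEmpty_or_nonempty {y // a y ≠ 0} with
  | inl h => exact ⟨1, one_pos, fun y hy => (h.false ⟨y, hy⟩).elim⟩
  | inr h =>
    obtain ⟨y₀, hy₀⟩ := Finite.exists_min fun y : {y // a y ≠ 0} => a y
    exact ⟨a y₀, (ha y₀).lt_of_ne' y₀.2, fun y hy => hy₀ ⟨y, hy⟩⟩

/-- The maximum of `M ^ l *ᵥ f` decreases with `l`, and over `k` steps the gap between it and
`(∑ x, f x) / s` shrinks by a fixed factor, since every row of `M ^ k` charges a point at which the
current vector is at most this average. -/
lemma eventually_pow_mulVec_apply_le (hM : M ∈ doublyStochastic ℝ X) {k : ℕ} {s : ℝ} (hs : 0 < s)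
    (hsupp : ∀ x, s ≤ (Finset.univ.filter fun y => (M ^ k) x y ≠ 0).card) {f : X → ℝ}
    (hf : ∀ x, 0 ≤ f x) {c : ℝ} (hc : (∑ x, f x) / s < c) :
    ∀ᶠ l in atTop, ∀ x, (M ^ l *ᵥ f) x ≤ c := by
  cases isEmpty_or_nonempty X with
  | inl h => exact Eventually.of_forall fun _ x => isEmptyElim x
  | inr h =>
  have hpow (l : ℕ) : M ^ l ∈ doublyStochastic ℝ X := pow_mem hM l
  have hrow {A : Matrix X X ℝ} (hA : A ∈ doublyStochastic ℝ X) : A ∈ rowStochastic ℝ X :=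
    (mem_doublyStochastic_iff_mem_rowStochastic_and_mem_colStochastic.1 hA).1
  have hnonneg (l : ℕ) (x : X) : 0 ≤ (M ^ l *ᵥ f) x :=
    nonneg_mulVec_of_mem_rowStochastic (hrow (hpow l)) hf x
  have hsum (l : ℕ) : ∑ x, (M ^ l *ᵥ f) x = ∑ x, f x :=
    sum_mulVec_of_mem_doublyStochastic (hpow l)
  have hadd (l j : ℕ) : M ^ (l + j) *ᵥ f = M ^ j *ᵥ (M ^ l *ᵥ f) := by
    rw [add_comm, pow_add, mulVec_mulVec]
  obtain ⟨ε, hε, hεM⟩ := exists_pos_le_of_ne_zero (a := fun p : X × X => (M ^ k) p.1 p.2)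
    fun p => nonneg_of_mem_doublyStochastic (hpow k)
  let C : ℕ → ℝ := fun l => ⨆ x, (M ^ l *ᵥ f) x
  have hC (l : ℕ) (x : X) : (M ^ l *ᵥ f) x ≤ C l :=
    le_ciSup (Set.finite_range (M ^ l *ᵥ f)).bddAbove x
  have hanti : Antitone C := antitone_nat_of_succ_le fun l => ciSup_le fun x => by
    rw [hadd, pow_one]
    exact mulVec_apply_le_of_forall_le (hrow hM) (hC l) x
  have hcontract (l : ℕ) : C (l + k) ≤ C l - ε * (C l - (∑ x, f x) / s) := ciSup_le fun x => by
    rw [hadd, ← hsum l]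
    exact mulVec_apply_le_sub (hrow (hpow k)) hε.le (fun x y => hεM (x, y)) hs hsupp (hnonneg l)
      (hC l) x
  have hlim : Tendsto C atTop (nhds (⨅ l, C l)) := tendsto_atTop_ciInf hanti
    ⟨0, by rintro _ ⟨l, rfl⟩; exact Real.iSup_nonneg (hnonneg l)⟩
  have hfix : (⨅ l, C l) ≤ (⨅ l, C l) - ε * ((⨅ l, C l) - (∑ x, f x) / s) :=
    le_of_tendsto_of_tendsto' (hlim.comp (tendsto_add_atTop_nat k))
      (hlim.sub ((hlim.sub_const _).const_mul ε)) hcontract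
  have hinf : (⨅ l, C l) ≤ (∑ x, f x) / s :=
    sub_nonpos.1 (nonpos_of_mul_nonpos_right (by linarith) hε)
  filter_upwards [hlim.eventually_lt_const (hinf.trans_lt hc)] with l hl x
  exact (hC l x).trans hl.le

end DoublyStochastic

section ReducedWords

open FreeGroup (mk IsReduced)

variable {α : Type*}

lemma mk_replicate (b : ℕ) (y : α × Bool) : mk (List.replicate b y) = mk [y] ^ b := by
  induction b with
  | zero => rfl
  | succ b ih => rw [List.replicate_succ, pow_succ', ← ih, FreeGroup.mul_mk, List.singleton_append]

lemma mk_singleton_not (y : α × Bool) : mk [(y.1, !y.2)] = (mk [y])⁻¹ := by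
  rw [FreeGroup.inv_mk, FreeGroup.invRev, List.map_singleton, List.reverse_singleton]

lemma isReduced_replicate_append {y : α × Bool} {w : List (α × Bool)} (hw : IsReduced w)
    (hyw : ∀ a ∈ w.head?, y.1 = a.1 → y.2 = a.2) (b : ℕ) :
    IsReduced (List.replicate b y ++ w) := by
  refine List.isChain_append.2 ⟨List.isChain_replicate_of_rel b fun _ => rfl, hw, ?_⟩
  intro c hc a ha
  rw [List.eq_of_mem_replicate (List.mem_of_getLast? hc)]
  exact hyw a ha

lemma isReduced_conj_replicate_append {x y : α × Bool} {w : List (α × Bool)} (hw : IsReduced w)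
    (hyw : ∀ a ∈ w.head?, a ≠ y) (hxy : x.1 ≠ y.1) (b e : ℕ) :
    IsReduced (List.replicate (b + 1) y ++ (List.replicate (e + 1) x ++
      (List.replicate (b + 1) (y.1, !y.2) ++ w))) := by
  refine isReduced_replicate_append (isReduced_replicate_append
    (isReduced_replicate_append hw ?_ _) ?_ _) ?_ _
  · intro a ha h
    have := hyw a ha
    grind
  · simp [List.replicate_succ, hxy]
  · simp [List.replicate_succ, hxy.symm]

lemma exists_letter_ne_of_mem_head? [Nontrivial α] (z : α × Bool) (w : List (α × Bool)) :
    ∃ y : α × Bool, (z.1 = y.1 → z.2 = y.2) ∧ ∀ a ∈ w.head?, a ≠ y := by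
  by_cases hz : z ∈ w.head?
  · obtain ⟨c, hc⟩ := exists_ne z.1
    refine ⟨(c, true), fun h => (hc h.symm).elim, fun a ha => ?_⟩
    rw [Option.mem_unique ha hz]
    rintro rfl
    exact hc rfl
  · exact ⟨z, fun _ => rfl, fun a ha => by rintro rfl; exact hz ha⟩

/-- The padding is `y ^ (b + 1) * x ^ |Q| * y ^ (-(b + 1))`: it is trivial in `Q`, and for suitable
letters `x` and `y` it can be inserted in front of `w` without cancellation. -/
lemma exists_isReduced_cons_map_eq [Nontrivial α] {Q : Type*} [Group Q] [Finite Q]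
    (q : FreeGroup α →* Q) {w : List (α × Bool)} (hw : IsReduced w) (z : α × Bool) (b : ℕ) :
    ∃ u : List (α × Bool), u.length = Nat.card Q + 2 * (b + 1) + w.length ∧
      IsReduced (z :: u) ∧ q (mk u) = q (mk w) := by
  obtain ⟨y, hzy, hyw⟩ := exists_letter_ne_of_mem_head? z w
  obtain ⟨a, ha⟩ := exists_ne y.1
  obtain ⟨e, he⟩ : ∃ e, Nat.card Q = e + 1 := Nat.exists_eq_add_one.2 Nat.card_pos
  refine ⟨_, ?_, List.isChain_cons.2
    ⟨?_, isReduced_conj_replicate_append (x := (a, true)) hw hyw ha b e⟩, ?_⟩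
  · simp only [List.length_append, List.length_replicate, he]
    ring
  · simpa [List.replicate_succ] using hzy
  · simp only [← FreeGroup.mul_mk, mk_replicate, mk_singleton_not, map_mul, map_pow, map_inv,
      ← he, pow_card_eq_one', one_mul, inv_pow, mul_inv_cancel_left]

/-- A quotient in which all relations have even length is bipartite, so words of one fixed length
may miss half of `Q`. -/
lemma exists_half_card_le_forall_exists_isReduced_cons [Nontrivial α] {Q : Type*} [Group Q]
    [Finite Q] {q : FreeGroup α →* Q} (hq : Function.Surjective q) :
    ∃ k, ∃ S : Finset Q, (Nat.card Q : ℝ) / 2 ≤ S.card ∧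
      ∀ h ∈ S, ∀ z, ∃ u : List (α × Bool), u.length = k ∧ IsReduced (z :: u) ∧ q (mk u) = h := by
  classical
  cases nonempty_fintype Q
  choose s hs using hq
  let len : Q → ℕ := fun h => (s h).toWord.length
  obtain ⟨L, hL⟩ : ∃ L, ∀ h, len h ≤ L :=
    ⟨Finset.univ.sup len, fun h => Finset.le_sup (Finset.mem_univ h)⟩
  obtain ⟨r, -, hr⟩ := Finset.exists_le_card_fiber_of_nsmul_le_card_of_maps_to
    (s := Finset.univ) (t := Finset.range 2) (f := fun h => len h % 2)
    (b := (Nat.card Q : ℝ) / 2) (fun h _ => Finset.mem_range.2 (Nat.mod_lt _ two_pos))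
    ⟨0, by simp⟩ (by simp [mul_div_cancel₀])
  refine ⟨Nat.card Q + 2 * (L + 1) + r, _, hr, fun h hh z => ?_⟩
  have hlen : len h % 2 = r := (Finset.mem_filter.1 hh).2
  obtain ⟨b, hb⟩ : ∃ b, 2 * (b + 1) + len h = 2 * (L + 1) + r :=
    ⟨(2 * L + r - len h) / 2, by grind⟩
  obtain ⟨u, hu, hzu, hqu⟩ :=
    exists_isReduced_cons_map_eq q (FreeGroup.isReduced_toWord (x := s h)) z b
  exact ⟨u, by rw [hu, add_assoc, hb, add_assoc], hzu, by rw [hqu, FreeGroup.mk_toWord, hs]⟩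

end ReducedWords

section NonBacktrackingWalk

open FreeGroup (mk IsReduced)
open Matrix

lemma card_length_succ_and {β : Type*} [Fintype β] (l : ℕ) (P : List β → Prop) :
    Nat.card {w : List β // w.length = l + 1 ∧ P w} =
      ∑ y, Nat.card {w : List β // w.length = l ∧ P (y :: w)} := by
  have (y : β) : Finite {w : List β // w.length = l ∧ P (y :: w)} :=
    ((List.finite_length_eq β l).subset fun _ h => h.1).to_subtype
  rw [← Nat.card_sigma]
  refine (Nat.card_congr (Equiv.ofBijective
    (fun w : Σ y, {w : List β // w.length = l ∧ P (y :: w)} =>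
      ⟨w.1 :: w.2.1, by rw [List.length_cons, w.2.2.1], w.2.2.2⟩) ⟨?_, ?_⟩)).symm
  · rintro ⟨y, w, hw⟩ ⟨y', w', hw'⟩ h
    obtain ⟨rfl, rfl⟩ := List.cons_eq_cons.1 (Subtype.ext_iff.1 h)
    rfl
  · rintro ⟨_ | ⟨y, w⟩, hw, hP⟩
    · exact (Nat.succ_ne_zero l hw.symm).elim
    · exact ⟨⟨y, w, Nat.succ_injective hw, hP⟩, rfl⟩

variable {α Q : Type*} [Group Q]

/-- The number of words `w` of length `l` with image `x.2` in `Q` such that `w` preceded by the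
letter `x.1` is reduced. -/
noncomputable def continuationCount (q : FreeGroup α →* Q) (l : ℕ) (x : (α × Bool) × Q) : ℕ :=
  Nat.card {w : List (α × Bool) // w.length = l ∧ IsReduced (x.1 :: w) ∧ q (mk w) = x.2}

lemma continuationCount_zero [DecidableEq Q] (q : FreeGroup α →* Q) (x : (α × Bool) × Q) :
    continuationCount q 0 x = if x.2 = 1 then 1 else 0 := by
  split_ifs with hx
  · refine Nat.card_eq_one_iff_unique.2 ⟨⟨fun v w => Subtype.ext ?_⟩, ⟨[], rfl, .singleton, ?_⟩⟩
    · rw [List.eq_nil_of_length_eq_zero v.2.1, List.eq_nil_of_length_eq_zero w.2.1]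
    · rw [hx, ← FreeGroup.one_eq_mk, map_one]
  · refine Nat.card_eq_zero.2 (.inl ⟨fun w => hx ?_⟩)
    rw [← w.2.2.2, List.eq_nil_of_length_eq_zero w.2.1, ← FreeGroup.one_eq_mk, map_one]

lemma map_mk_cons_eq_iff (q : FreeGroup α →* Q) (y : α × Bool) (w : List (α × Bool)) (g : Q) :
    q (mk (y :: w)) = g ↔ q (mk w) = (q (mk [y]))⁻¹ * g := by
  rw [← List.singleton_append, ← FreeGroup.mul_mk, map_mul, eq_inv_mul_iff_mul_eq]

lemma card_filter_not_inverse [Fintype α] [DecidableEq α] (z : α × Bool) :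
    ((Finset.univ.filter fun y : α × Bool => z.1 = y.1 → z.2 = y.2).card : ℝ) =
      2 * Fintype.card α - 1 := by
  have : (Finset.univ.filter fun y : α × Bool => z.1 = y.1 → z.2 = y.2) =
      Finset.univ.erase (z.1, !z.2) := by
    ext y
    obtain ⟨⟨a, s⟩, ⟨b, t⟩⟩ := z, y
    cases s <;> cases t <;> simp [@eq_comm _ a b]
  have hcard : (Finset.univ.erase (z.1, !z.2)).card + 1 = Fintype.card α * 2 := by
    rw [Finset.card_erase_add_one (Finset.mem_univ _), Finset.card_univ, Fintype.card_prod,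
      Fintype.card_bool]
  rw [this, eq_sub_iff_add_eq, mul_comm]
  exact_mod_cast hcard

variable [Fintype α] [DecidableEq α]

lemma continuationCount_succ (q : FreeGroup α →* Q) (l : ℕ) (x : (α × Bool) × Q) :
    continuationCount q (l + 1) x = ∑ y : α × Bool, if x.1.1 = y.1 → x.1.2 = y.2 then
      continuationCount q l (y, (q (mk [y]))⁻¹ * x.2) else 0 := by
  rw [continuationCount, card_length_succ_and]
  refine Finset.sum_congr rfl fun y _ => ?_
  split_ifs with hy
  · simp only [FreeGroup.isReduced_cons_cons, map_mk_cons_eq_iff, continuationCount,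
      and_iff_right hy]
  · simp only [FreeGroup.isReduced_cons_cons, hy, false_and, and_false, Nat.card_of_isEmpty]

/-- The transition matrix of the non-backtracking walk on the Cayley graph of `Q`. A state consists
of the last letter read and of the element of `Q` which the letters still to be read have to
represent. -/
noncomputable def stepMatrix [DecidableEq Q] (q : FreeGroup α →* Q) :
    Matrix ((α × Bool) × Q) ((α × Bool) × Q) ℝ :=
  of fun x y => if (x.1.1 = y.1.1 → x.1.2 = y.1.2) ∧ x.2 = q (mk [y.1]) * y.2 then
    (2 * Fintype.card α - 1 : ℝ)⁻¹ else 0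

variable [Fintype Q] [DecidableEq Q]

lemma stepMatrix_mulVec_apply (q : FreeGroup α →* Q) (f : (α × Bool) × Q → ℝ)
    (x : (α × Bool) × Q) :
    (stepMatrix q *ᵥ f) x = (2 * Fintype.card α - 1 : ℝ)⁻¹ * ∑ y : α × Bool,
      if x.1.1 = y.1 → x.1.2 = y.2 then f (y, (q (mk [y]))⁻¹ * x.2) else 0 := by
  simp only [mulVec, dotProduct, stepMatrix, of_apply, Fintype.sum_prod_type, Finset.mul_sum]
  simp [← inv_mul_eq_iff_eq_mul, ite_and, ite_mul]

lemma vecMul_stepMatrix_apply (q : FreeGroup α →* Q) (f : (α × Bool) × Q → ℝ)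
    (y : (α × Bool) × Q) :
    (f ᵥ* stepMatrix q) y = (2 * Fintype.card α - 1 : ℝ)⁻¹ * ∑ z : α × Bool,
      if y.1.1 = z.1 → y.1.2 = z.2 then f (z, q (mk [y.1]) * y.2) else 0 := by
  have hcomm (z : α × Bool) : (y.1.1 = z.1 → y.1.2 = z.2) ↔ (z.1 = y.1.1 → z.2 = y.1.2) := by
    rw [eq_comm, @eq_comm Bool]
  simp only [vecMul, dotProduct, stepMatrix, of_apply, Fintype.sum_prod_type, Finset.mul_sum, hcomm]
  simp [ite_and, mul_comm]

lemma stepMatrix_mem_doublyStochastic [Nonempty α] (q : FreeGroup α →* Q) :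
    stepMatrix q ∈ doublyStochastic ℝ ((α × Bool) × Q) := by
  have hα : (1 : ℝ) ≤ Fintype.card α := by exact_mod_cast Fintype.card_pos (α := α)
  have hD : (0 : ℝ) < 2 * Fintype.card α - 1 := by linarith
  refine mem_doublyStochastic.2 ⟨fun x y => ?_, funext fun x => ?_, funext fun y => ?_⟩
  · rw [stepMatrix, of_apply]
    split_ifs
    exacts [inv_nonneg.2 hD.le, le_rfl]
  · simp only [stepMatrix_mulVec_apply, Pi.one_apply, Finset.sum_boole, card_filter_not_inverse,
      inv_mul_cancel₀ hD.ne']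
  · simp only [vecMul_stepMatrix_apply, Pi.one_apply, Finset.sum_boole, card_filter_not_inverse,
      inv_mul_cancel₀ hD.ne']

lemma stepMatrix_pow_mulVec_apply (q : FreeGroup α →* Q) (l : ℕ) (x : (α × Bool) × Q) :
    (stepMatrix q ^ l *ᵥ fun x => if x.2 = 1 then 1 else 0) x =
      continuationCount q l x / (2 * Fintype.card α - 1 : ℝ) ^ l := by
  induction l generalizing x with
  | zero => simp [continuationCount_zero]
  | succ l ih =>
    rw [pow_succ', ← mulVec_mulVec, stepMatrix_mulVec_apply, continuationCount_succ, pow_succ',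
      div_eq_inv_mul, mul_inv, mul_assoc, Nat.cast_sum, Finset.mul_sum _ _ (_ ^ l)⁻¹]
    congr 1
    refine Finset.sum_congr rfl fun y _ => ?_
    split_ifs
    · rw [ih, div_eq_inv_mul]
    · simp

lemma exists_stepMatrix_pow_pos [Nonempty α] (q : FreeGroup α →* Q) (u : List (α × Bool))
    {z : α × Bool} (hu : IsReduced (z :: u)) (g : Q) :
    ∃ z', 0 < (stepMatrix q ^ u.length) (z, q (mk u) * g) (z', g) := by
  induction u generalizing z with
  | nil => exact ⟨z, by simp [← FreeGroup.one_eq_mk]⟩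
  | cons y u ih =>
    have hmem := stepMatrix_mem_doublyStochastic q
    obtain ⟨hzy, hu⟩ := FreeGroup.isReduced_cons_cons.1 hu
    obtain ⟨z', hz'⟩ := ih hu
    have hstep : 0 < stepMatrix q (z, q (mk (y :: u)) * g) (y, q (mk u) * g) := by
      have hα : (1 : ℝ) ≤ Fintype.card α := by exact_mod_cast Fintype.card_pos (α := α)
      rw [stepMatrix, of_apply, if_pos ⟨hzy, by
        rw [← mul_assoc, ← map_mul, FreeGroup.mul_mk, List.singleton_append]⟩, inv_pos]
      linarith
    refine ⟨z', ?_⟩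
    rw [List.length_cons, pow_succ', mul_apply]
    exact Finset.sum_pos' (fun v _ => mul_nonneg (nonneg_of_mem_doublyStochastic hmem)
      (nonneg_of_mem_doublyStochastic (pow_mem hmem _))) ⟨_, Finset.mem_univ _, mul_pos hstep hz'⟩

lemma card_le_card_support_stepMatrix_pow [Nonempty α] {q : FreeGroup α →* Q} {k : ℕ} {S : Finset Q}
    (hS : ∀ h ∈ S, ∀ z, ∃ u : List (α × Bool), u.length = k ∧ IsReduced (z :: u) ∧ q (mk u) = h)
    (x : (α × Bool) × Q) :
    S.card ≤ (Finset.univ.filter fun y => (stepMatrix q ^ k) x y ≠ 0).card := by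
  have (h : Q) (hh : h ∈ S) : ∃ z', 0 < (stepMatrix q ^ k) x (z', h⁻¹ * x.2) := by
    obtain ⟨u, rfl, hu, rfl⟩ := hS h hh x.1
    simpa using exists_stepMatrix_pow_pos q u hu ((q (mk u))⁻¹ * x.2)
  choose! z' hz' using this
  refine Finset.card_le_card_of_injOn (fun h => (z' h, h⁻¹ * x.2))
    (fun h hh => Finset.mem_filter.2 ⟨Finset.mem_univ _, (hz' h hh).ne'⟩) fun h _ h' _ heq => ?_
  exact inv_injective (mul_right_cancel (Prod.ext_iff.1 heq).2)

end NonBacktrackingWalk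

section Equidistribution

open FreeGroup (mk IsReduced)
open Matrix

instance (n l : ℕ) : Finite (ReducedWord n l) :=
  ((List.finite_length_eq (Fin n × Bool) l).subset fun _ h => h.2).to_subtype

instance (n l : ℕ) [NeZero n] : Nonempty (ReducedWord n l) :=
  ⟨⟨List.replicate l (0, true), FreeGroup.isReduced_iff_reduce_eq.1
    (List.isChain_replicate_of_rel l fun _ => rfl), List.length_replicate⟩⟩

variable {n : ℕ} {Q : Type*} [Group Q]

lemma card_reducedWord_fiber_succ (q : FreeGroup (Fin n) →* Q) (l : ℕ) (g : Q) :
    Nat.card {w : ReducedWord n (l + 1) // q (mk w.1) = g} =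
      ∑ z : Fin n × Bool, continuationCount q l (z, (q (mk [z]))⁻¹ * g) :=
  calc Nat.card {w : ReducedWord n (l + 1) // q (mk w.1) = g}
    _ = Nat.card {w : List (Fin n × Bool) // w.length = l + 1 ∧ IsReduced w ∧ q (mk w) = g} :=
        Nat.card_congr
          { toFun w := ⟨w.1.1, w.1.2.2, FreeGroup.isReduced_iff_reduce_eq.2 w.1.2.1, w.2⟩
            invFun w := ⟨⟨w.1, FreeGroup.isReduced_iff_reduce_eq.1 w.2.2.1, w.2.1⟩, w.2.2.2⟩ }
    _ = ∑ z, continuationCount q l (z, (q (mk [z]))⁻¹ * g) := by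
        simp only [card_length_succ_and, map_mk_cons_eq_iff, continuationCount]

lemma card_reducedWord_succ [NeZero n] (l : ℕ) :
    (Nat.card (ReducedWord n (l + 1)) : ℝ) = 2 * n * (2 * n - 1) ^ l := by
  have hn : (1 : ℝ) ≤ n := by exact_mod_cast NeZero.one_le
  have hcount (x : (Fin n × Bool) × Unit) :
      (continuationCount (1 : FreeGroup (Fin n) →* Unit) l x : ℝ) = (2 * n - 1) ^ l := by
    have hx := stepMatrix_pow_mulVec_apply (1 : FreeGroup (Fin n) →* Unit) l x
    have hone : (stepMatrix (1 : FreeGroup (Fin n) →* Unit) ^ l *ᵥ 1) x = 1 := congrFun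
      (mulVec_one_of_mem_doublyStochastic (pow_mem (stepMatrix_mem_doublyStochastic _) l)) x
    have hf : (fun y : (Fin n × Bool) × Unit => if y.2 = 1 then (1 : ℝ) else 0) = 1 :=
      funext fun y => if_pos rfl
    rw [hf, hone, Fintype.card_fin, eq_comm, div_eq_one_iff_eq (pow_pos (by linarith) l).ne'] at hx
    exact hx
  have hcard := card_reducedWord_fiber_succ (1 : FreeGroup (Fin n) →* Unit) l 1
  rw [Nat.card_congr (Equiv.subtypeUnivEquiv fun _ => rfl)] at hcard
  rw [hcard, Nat.cast_sum, Finset.sum_congr rfl fun z _ => hcount _]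
  simp [mul_comm]

/-- The constant is `2 * n`, the number of states `(z, 1)`, divided by the proportion `1 / 2` of `Q`
that the walk reaches in a fixed number of steps; the `+ 1` leaves room for a strict inequality. -/
lemma eventually_card_fiber_le (hn : 2 ≤ n) [Finite Q] {q : FreeGroup (Fin n) →* Q}
    (hq : Function.Surjective q) : ∀ᶠ l in atTop, ∀ g,
      (Nat.card {w : ReducedWord n l // q (mk w.1) = g} : ℝ) ≤
        (4 * n + 1) / Nat.card Q * Nat.card (ReducedWord n l) := by
  classical
  cases nonempty_fintype Q
  have : Nontrivial (Fin n) := Fin.nontrivial_iff_two_le.2 hn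
  have : NeZero n := ⟨by grind⟩
  have hQ : (0 : ℝ) < Nat.card Q := by exact_mod_cast Nat.card_pos
  have hD : (0 : ℝ) < 2 * n - 1 := by
    have : (2 : ℝ) ≤ n := by exact_mod_cast hn
    linarith
  obtain ⟨k, S, hScard, hS⟩ := exists_half_card_le_forall_exists_isReduced_cons hq
  have hsum : (∑ x : (Fin n × Bool) × Q, if x.2 = 1 then 1 else 0) / ((Nat.card Q : ℝ) / 2) <
      (4 * n + 1) / Nat.card Q := by
    rw [Fintype.sum_prod_type, div_div_eq_mul_div]
    gcongr
    simp
    linarith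
  have hdecay := eventually_pow_mulVec_apply_le (stepMatrix_mem_doublyStochastic q)
    (half_pos hQ) (fun x => hScard.trans (Nat.cast_le.2 (card_le_card_support_stepMatrix_pow hS x)))
    (fun x => by split_ifs <;> norm_num) hsum
  rw [eventually_atTop] at hdecay
  obtain ⟨l₀, hl₀⟩ := hdecay
  refine eventually_atTop.2 ⟨l₀ + 1, fun l hl g => ?_⟩
  obtain ⟨l, rfl⟩ := Nat.exists_eq_add_one_of_ne_zero (Nat.ne_zero_of_lt hl)
  rw [card_reducedWord_fiber_succ, card_reducedWord_succ, Nat.cast_sum]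
  calc ∑ z : Fin n × Bool, (continuationCount q l (z, (q (mk [z]))⁻¹ * g) : ℝ)
    _ ≤ ∑ _z : Fin n × Bool, (4 * n + 1) / Nat.card Q * (2 * n - 1 : ℝ) ^ l := by
        gcongr with z
        rw [← div_le_iff₀ (pow_pos hD l)]
        have := hl₀ l (by grind) (z, (q (mk [z]))⁻¹ * g)
        rwa [stepMatrix_pow_mulVec_apply, Fintype.card_fin] at this
    _ = (4 * n + 1) / Nat.card Q * (2 * n * (2 * n - 1) ^ l) := by
        simp
        ring

end Equidistribution

section WordProbability

open FreeGroup (mk)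

lemma wordProb_nonneg (n l k : ℕ) (P : (Fin k → FreeGroup (Fin n)) → Prop) :
    0 ≤ wordProb n l k P :=
  div_nonneg (Nat.cast_nonneg _) (pow_nonneg (Nat.cast_nonneg _) _)

lemma wordProb_le_of_imp_comp_castLE {n l m k : ℕ} [NeZero n] (h : m ≤ k)
    {P : (Fin k → FreeGroup (Fin n)) → Prop} {P' : (Fin m → FreeGroup (Fin n)) → Prop}
    (hP : ∀ R, P R → P' (R ∘ Fin.castLE h)) : wordProb n l k P ≤ wordProb n l m P' := by
  obtain ⟨d, rfl⟩ := Nat.exists_eq_add_of_le h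
  have hpos : (0 : ℝ) < Nat.card (ReducedWord n l) := by exact_mod_cast Nat.card_pos
  have hcard : Nat.card {R : Fin (m + d) → ReducedWord n l // P fun i => mk (R i).1} ≤
      Nat.card {R : Fin m → ReducedWord n l // P' fun i => mk (R i).1} *
        Nat.card (ReducedWord n l) ^ d := by
    have hd : Nat.card (Fin d → ReducedWord n l) = Nat.card (ReducedWord n l) ^ d := by
      rw [Nat.card_fun, Nat.card_fin]
    rw [← hd, ← Nat.card_prod]
    refine Nat.card_le_card_of_injective
      (fun R => (⟨fun i => R.1 (Fin.castAdd d i), hP _ R.2⟩, fun i => R.1 (Fin.natAdd m i)))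
      fun R R' hR => Subtype.ext ((Fin.appendEquiv m d).symm.injective ?_)
    exact Prod.ext (congrArg (fun x => x.1.1) hR) (congrArg (fun x => x.2) hR)
  rw [wordProb, wordProb, div_le_div_iff₀ (by positivity) (by positivity), pow_add,
    mul_left_comm, mul_comm _ (_ ^ m)]
  exact mul_le_mul_of_nonneg_left (by exact_mod_cast hcard) (by positivity)

lemma card_tuple_le_of_card_fiber_le {β Q : Type*} [Finite β] [Finite Q] {q : β → Q} {c : ℝ}
    (hc : ∀ g, (Nat.card {b // q b = g} : ℝ) ≤ c) {ι : Type*} [Fintype ι] (P : (ι → Q) → Prop) :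
    (Nat.card {R : ι → β // P (q ∘ R)} : ℝ) ≤
      Nat.card {v : ι → Q // P v} * c ^ Fintype.card ι := by
  have := Fintype.ofFinite {v : ι → Q // P v}
  have hcard : Nat.card {R : ι → β // P (q ∘ R)} ≤
      Nat.card (Σ v : {v : ι → Q // P v}, ∀ i, {b // q b = v.1 i}) :=
    Nat.card_le_card_of_injective
      (fun R => ⟨⟨q ∘ R.1, R.2⟩, fun i => ⟨R.1 i, rfl⟩⟩) fun R R' h => Subtype.ext
        (congrArg (fun x : (Σ v : {v : ι → Q // P v}, ∀ i, {b // q b = v.1 i}) =>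
          fun i => (x.2 i).1) h)
  calc (Nat.card {R : ι → β // P (q ∘ R)} : ℝ)
    _ ≤ ∑ v : {v : ι → Q // P v}, ∏ i, (Nat.card {b // q b = v.1 i} : ℝ) := by
        simpa only [Nat.card_sigma, Nat.card_pi, Nat.cast_sum, Nat.cast_prod]
          using Nat.cast_le (α := ℝ).2 hcard
    _ ≤ ∑ _v : {v : ι → Q // P v}, ∏ _i : ι, c := by
        gcongr
        exact hc _
    _ = Nat.card {v : ι → Q // P v} * c ^ Fintype.card ι := by
        simp

lemma wordProb_comp_le {n l m : ℕ} {Q : Type*} [Group Q] [Finite Q] (q : FreeGroup (Fin n) →* Q)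
    {c : ℝ} (hc : ∀ g, (Nat.card {w : ReducedWord n l // q (mk w.1) = g} : ℝ) ≤
      c * Nat.card (ReducedWord n l)) (hc₀ : 0 ≤ c) (P : (Fin m → Q) → Prop) :
    wordProb n l m (fun R => P (q ∘ R)) ≤ Nat.card {v : Fin m → Q // P v} * c ^ m := by
  refine div_le_of_le_mul₀ (by positivity) (by positivity) ?_
  refine (card_tuple_le_of_card_fiber_le hc P).trans_eq ?_
  rw [Fintype.card_fin, mul_pow, mul_assoc]

end WordProbability

section LinearFamilies

variable {F V : Type*} [Field F] [AddCommGroup V] [Module F V] [FiniteDimensional F V]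

/-- If `s` is a section of `T`, then `(S + c • T) ∘ s = S ∘ s + c`, which is surjective unless `-c`
is an eigenvalue of `S ∘ s`. -/
lemma encard_not_surjective_add_smul_le {W : Type*} [AddCommGroup W] [Module F W]
    (S : W →ₗ[F] V) {T : W →ₗ[F] V} (hT : Function.Surjective T) :
    {c : F | ¬ Function.Surjective (S + c • T)}.encard ≤ Module.finrank F V := by
  classical
  obtain ⟨s, hs⟩ := T.exists_rightInverse_of_surjective (LinearMap.range_eq_top.2 hT)
  let A : Module.End F V := S ∘ₗ s
  have hroot : {c : F | ¬ Function.Surjective (S + c • T)} ⊆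
      A.charpoly.roots.toFinset.image Neg.neg := by
    intro c hc
    refine Finset.mem_coe.2 (Finset.mem_image.2 ⟨-c, ?_, neg_neg c⟩)
    rw [Multiset.mem_toFinset, Polynomial.mem_roots A.charpoly_monic.ne_zero,
      ← Module.End.hasEigenvalue_iff_isRoot_charpoly, Module.End.hasEigenvalue_iff]
    intro hbot
    rw [Module.End.eigenspace_def, LinearMap.ker_eq_bot, LinearMap.injective_iff_surjective] at hbot
    refine hc (Function.Surjective.of_comp (g := s) fun v => (hbot v).imp fun x hx => ?_)
    have hsx : T (s x) = x := LinearMap.congr_fun hs x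
    rw [← hx]
    simp [A, hsx]
  calc {c : F | ¬ Function.Surjective (S + c • T)}.encard
    _ ≤ ((A.charpoly.roots.toFinset.image Neg.neg : Finset F) : Set F).encard :=
        Set.encard_le_encard hroot
    _ = (A.charpoly.roots.toFinset.image Neg.neg).card := Set.encard_coe_eq_coe_finsetCard _
    _ ≤ A.charpoly.roots.card := by
        exact_mod_cast Finset.card_image_le.trans (Multiset.toFinset_card_le _)
    _ ≤ Module.finrank F V := by
        exact_mod_cast (Polynomial.card_roots' _).trans_eq A.charpoly_natDegree

lemma card_mul_card_not_surjective_le [Finite F] {E W : Type*} [AddCommGroup E] [Module F E]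
    [Finite E] [AddCommGroup W] [Module F W] (T : E →ₗ[F] W →ₗ[F] V) {e₀ : E}
    (he₀ : Function.Surjective (T e₀)) :
    Nat.card F * Nat.card {e // ¬ Function.Surjective (T e)} ≤
      Module.finrank F V * Nat.card E := by
  classical
  cases nonempty_fintype F
  cases nonempty_fintype E
  have hline (e : E) : (Finset.univ.filter fun c : F =>
      ¬ Function.Surjective (T (e + c • e₀))).card ≤ Module.finrank F V := by
    simpa [← Set.encard_coe_eq_coe_finsetCard, ← Nat.cast_le (α := ℕ∞)] using
      encard_not_surjective_add_smul_le (T e) he₀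
  have hshift (c : F) : Nat.card {e // ¬ Function.Surjective (T (e + c • e₀))} =
      Nat.card {e // ¬ Function.Surjective (T e)} :=
    Nat.card_congr ((Equiv.addRight (c • e₀)).subtypeEquiv fun _ => Iff.rfl)
  calc Nat.card F * Nat.card {e // ¬ Function.Surjective (T e)}
    _ = ∑ c : F, Nat.card {e // ¬ Function.Surjective (T (e + c • e₀))} := by
        rw [Finset.sum_congr rfl fun c _ => hshift c, Finset.sum_const, Finset.card_univ,
          Nat.card_eq_fintype_card, smul_eq_mul]
    _ = ∑ e : E, (Finset.univ.filter fun c : F =>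
          ¬ Function.Surjective (T (e + c • e₀))).card := by
        simp only [Nat.card_eq_fintype_card, Fintype.card_subtype, Finset.card_filter]
        exact Finset.sum_comm
    _ ≤ ∑ _e : E, Module.finrank F V := Finset.sum_le_sum fun e _ => hline e
    _ = Module.finrank F V * Nat.card E := by
        rw [Finset.sum_const, smul_eq_mul, mul_comm, Finset.card_univ, Nat.card_eq_fintype_card]

lemma card_mul_card_span_orbit_ne_top_le [Finite F] {ι σ : Type*} [Finite ι]
    (ρ : σ → Module.End F V) {v₀ : ι → V}
    (hv₀ : Submodule.span F (Set.range fun i : ι × σ => ρ i.2 (v₀ i.1)) = ⊤) :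
    Nat.card F * Nat.card {v : ι → V //
        Submodule.span F (Set.range fun i : ι × σ => ρ i.2 (v i.1)) ≠ ⊤} ≤
      Module.finrank F V * Nat.card (ι → V) := by
  have : Finite V := Module.finite_of_finite F
  let T : (ι → V) →ₗ[F] (ι × σ →₀ F) →ₗ[F] V := Finsupp.bilinearCombination F F ∘ₗ
    LinearMap.pi fun i : ι × σ => ρ i.2 ∘ₗ LinearMap.proj i.1
  have hT (v : ι → V) : Function.Surjective (T v) ↔
      Submodule.span F (Set.range fun i : ι × σ => ρ i.2 (v i.1)) = ⊤ := by
    rw [← Finsupp.range_linearCombination, LinearMap.range_eq_top]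
    rfl
  simpa only [hT] using card_mul_card_not_surjective_le T ((hT v₀).2 hv₀)

end LinearFamilies

section NormalGeneration

open scoped IsMulCommutative

lemma finrank_additive_le_rank (R B : Type*) [Ring R] [StrongRankCondition R] [CommGroup B]
    [Group.FG B] [Module R (Additive B)] : Module.finrank R (Additive B) ≤ Group.rank B := by
  classical
  obtain ⟨S, hS, hS'⟩ := Group.rank_spec B
  let W := Submodule.span R (S.image Additive.ofMul : Set (Additive B))
  have hle : (⊤ : Subgroup B) ≤ AddSubgroup.toSubgroup' W.toAddSubgroup := by
    rw [← hS', Subgroup.closure_le]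
    intro s hs
    have hsW : Additive.ofMul s ∈ W :=
      Submodule.subset_span (Finset.mem_image_of_mem Additive.ofMul hs)
    exact hsW
  have hW : W = ⊤ := eq_top_iff.2 fun x _ => hle (Subgroup.mem_top x.toMul)
  rw [← hS, ← finrank_top, ← hW]
  exact (finrank_span_finset_le_card _).trans Finset.card_image_le

variable {Q : Type*} [Group Q] (p : ℕ) (B : Subgroup Q) [B.Normal] [IsMulCommutative B]
  [Module (ZMod p) (Additive B)]

/-- The action of `g` by conjugation on a commutative normal subgroup of exponent `p`, regarded as
an endomorphism of a `ZMod p`-module. -/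
def conjLinearMap (g : Q) : Module.End (ZMod p) (Additive B) :=
  (MonoidHom.toAdditive (MulAut.conjNormal g : B ≃* B).toMonoidHom).toZModLinearMap p

lemma coe_conjLinearMap_apply (g : Q) (b : Additive B) :
    ((conjLinearMap p B g b).toMul : Q) = g * b.toMul * g⁻¹ :=
  rfl

lemma map_subtype_span_conjLinearMap {ι : Type*} (v : ι → Additive B) :
    (AddSubgroup.toSubgroup' (Submodule.span (ZMod p)
        (Set.range fun i : ι × Q => conjLinearMap p B i.2 (v i.1))).toAddSubgroup).map B.subtype =
      Subgroup.normalClosure (Set.range fun i => ((v i).toMul : Q)) := by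
  set N := Subgroup.normalClosure (Set.range fun i => ((v i).toMul : Q)) with hN
  apply le_antisymm
  · let P : Submodule (ZMod p) (Additive B) :=
      AddSubgroup.toZModSubmodule p (M := Additive B) (Subgroup.toAddSubgroup (N.subgroupOf B))
    have hP : Submodule.span (ZMod p)
        (Set.range fun i : ι × Q => conjLinearMap p B i.2 (v i.1)) ≤ P := by
      rw [Submodule.span_le]
      rintro _ ⟨i, rfl⟩
      exact Subgroup.normalClosure_normal.conj_mem _
        (Subgroup.subset_normalClosure (Set.mem_range_self i.1)) i.2
    rintro _ ⟨b, hb, rfl⟩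
    exact hP hb
  · rw [hN, Subgroup.normalClosure, Subgroup.closure_le]
    intro y hy
    obtain ⟨_, ⟨i, rfl⟩, hi⟩ := Group.mem_conjugatesOfSet_iff.1 hy
    obtain ⟨g, rfl⟩ := isConj_iff.1 hi
    have hgi : conjLinearMap p B g (v i) ∈ Submodule.span (ZMod p)
        (Set.range fun i : ι × Q => conjLinearMap p B i.2 (v i.1)) :=
      Submodule.subset_span (Set.mem_range_self (i, g))
    exact ⟨(conjLinearMap p B g (v i)).toMul, hgi, coe_conjLinearMap_apply p B g _⟩

lemma span_conjLinearMap_eq_top_iff {ι : Type*} (v : ι → Additive B) :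
    Submodule.span (ZMod p) (Set.range fun i : ι × Q => conjLinearMap p B i.2 (v i.1)) = ⊤ ↔
      Subgroup.normalClosure (Set.range fun i => ((v i).toMul : Q)) = B := by
  rw [← map_subtype_span_conjLinearMap p B v]
  constructor
  · intro h
    rw [h]
    exact Subgroup.ext fun x => by simp
  · refine fun h => eq_top_iff.2 fun x _ => ?_
    obtain ⟨y, hy, hyx⟩ := h.ge x.toMul.2
    obtain rfl : y = x.toMul := Subtype.ext hyx
    exact hy

lemma mul_card_normalClosure_ne_le [Finite Q] [Fact p.Prime] {ι : Type*} [Finite ι] {v₀ : ι → Q}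
    (hv₀ : Subgroup.normalClosure (Set.range v₀) = B) :
    p * Nat.card {v : ι → Q // (∀ i, v i ∈ B) ∧ Subgroup.normalClosure (Set.range v) ≠ B} ≤
      Group.rank B * Nat.card B ^ Nat.card ι := by
  obtain ⟨w₀, rfl⟩ : ∃ w₀ : ι → Additive B, (fun i => ((w₀ i).toMul : Q)) = v₀ :=
    ⟨fun i => Additive.ofMul ⟨v₀ i, hv₀.le (Subgroup.subset_normalClosure ⟨i, rfl⟩)⟩, rfl⟩
  have hspan := (span_conjLinearMap_eq_top_iff p B w₀).2 hv₀
  have hcount := card_mul_card_span_orbit_ne_top_le (conjLinearMap p B) hspan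
  simp only [ne_eq, span_conjLinearMap_eq_top_iff, Nat.card_zmod, Nat.card_fun] at hcount
  refine (Nat.mul_le_mul_left p ?_).trans
    (hcount.trans (Nat.mul_le_mul_right _ (finrank_additive_le_rank _ B)))
  exact Nat.card_le_card_of_injective
    (fun v => ⟨fun i => Additive.ofMul ⟨v.1 i, v.2.1 i⟩, v.2.2⟩) fun v w h =>
      Subtype.ext (funext fun i => congrArg (fun x => ((x.1 i).toMul : Q)) h)

end NormalGeneration

section CommPow

open scoped IsMulCommutative commutatorElement

/-- The subgroup `[K, K] K ^ p` generated by the commutators and the `p`-th powers of `K`. For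
prime `p` and normal `K`, the quotient of `K` by it is the largest one that is a
`ZMod p`-module. -/
def commPow {F : Type*} [Group F] (K : Subgroup F) (p : ℕ) : Subgroup F :=
  ⁅K, K⁆ ⊔ Subgroup.normalClosure ((fun x => x ^ p) '' (K : Set F))

variable {F : Type*} [Group F] (K : Subgroup F) (p : ℕ)

lemma commutator_le_commPow : ⁅K, K⁆ ≤ commPow K p :=
  le_sup_left

variable [K.Normal]

instance commPow_normal : (commPow K p).Normal := by
  unfold commPow
  infer_instance

lemma commPow_le : commPow K p ≤ K := by
  refine sup_le (Subgroup.commutator_le_left K K) (Subgroup.normalClosure_le_normal ?_)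
  rintro _ ⟨x, hx, rfl⟩
  exact K.pow_mem hx p

instance isMulCommutative_map_commPow :
    IsMulCommutative (K.map (QuotientGroup.mk' (commPow K p))) := by
  rw [← Subgroup.commutator_self_eq_bot_iff, ← Subgroup.map_commutator, Subgroup.map_eq_bot_iff,
    QuotientGroup.ker_mk']
  exact commutator_le_commPow K p

lemma map_commPow_pow_eq_one (a : K.map (QuotientGroup.mk' (commPow K p))) : a ^ p = 1 := by
  obtain ⟨_, x, hx, rfl⟩ := a
  exact Subtype.ext ((QuotientGroup.eq_one_iff (x ^ p)).2
    (Subgroup.mem_sup_right (Subgroup.subset_normalClosure ⟨x, hx, rfl⟩)))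

lemma finite_quotient_commPow [Group.FG K] [K.FiniteIndex] (hp : p ≠ 0) :
    Finite (F ⧸ commPow K p) := by
  set q := QuotientGroup.mk' (commPow K p)
  have : Group.FG (K.map q) := Group.fg_of_surjective (q.subgroupMap_surjective K)
  have : Finite (K.map q) := CommGroup.finite_of_fg_isMulTorsion _ fun a =>
    isOfFinOrder_iff_pow_eq_one.2 ⟨p, Nat.pos_of_ne_zero hp, map_commPow_pow_eq_one K p a⟩
  have hindex : (K.map q).index ≠ 0 := ne_zero_of_dvd_ne_zero Subgroup.FiniteIndex.index_ne_zero
    (K.index_map_dvd (QuotientGroup.mk'_surjective (commPow K p)))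
  refine Nat.finite_of_card_ne_zero ?_
  rw [← (K.map q).card_mul_index]
  exact mul_ne_zero Nat.card_pos.ne' hindex

lemma normalClosure_map_eq_iff {ι : Type*} (v : ι → F) :
    Subgroup.normalClosure (Set.range (QuotientGroup.mk' (commPow K p) ∘ v)) =
        K.map (QuotientGroup.mk' (commPow K p)) ↔
      Subgroup.normalClosure (Set.range v) ⊔ commPow K p = K := by
  rw [Set.range_comp, ← Subgroup.map_normalClosure _ _ (QuotientGroup.mk'_surjective _),
    Subgroup.map_eq_map_iff, QuotientGroup.ker_mk', sup_eq_left.2 (commPow_le K p)]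

lemma commPow_le_map_comap_range_powMonoidHom {A : Type*} [CommGroup A] (χ : K →* A) :
    commPow K p ≤ ((powMonoidHom p : A →* A).range.comap χ).map K.subtype := by
  refine sup_le (Subgroup.commutator_le.2 fun x hx y hy => ?_) ?_
  · refine ⟨⁅(⟨x, hx⟩ : K), (⟨y, hy⟩ : K)⁆, ?_, rfl⟩
    rw [SetLike.mem_coe, Subgroup.mem_comap, map_commutatorElement,
      commutatorElement_eq_one_iff_mul_comm.2 (mul_comm _ _)]
    exact one_mem _
  · rw [Subgroup.normalClosure, Subgroup.closure_le]
    intro y hy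
    obtain ⟨_, ⟨x, hx, rfl⟩, hxy⟩ := Group.mem_conjugatesOfSet_iff.1 hy
    obtain ⟨g, rfl⟩ := isConj_iff.1 hxy
    have hgx : g * x * g⁻¹ ∈ K := Subgroup.Normal.conj_mem inferInstance x hx g
    exact ⟨⟨g * x * g⁻¹, hgx⟩ ^ p, ⟨χ ⟨g * x * g⁻¹, hgx⟩, (map_pow χ _ p).symm⟩, conj_pow⟩

lemma finite_of_surjective_pow {A : Type*} [CommGroup A] [Group.FG A] {p : ℕ} (hp : p ≠ 1)
    (h : Function.Surjective fun a : A => a ^ p) : Finite A := by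
  have hfg : (⊤ : Submodule ℤ (Additive A)).FG :=
    (Module.Finite.iff_addGroup_fg.2 inferInstance).fg_top
  have hdiv : ⊤ ≤ Ideal.span {(p : ℤ)} • (⊤ : Submodule ℤ (Additive A)) := fun a _ => by
    obtain ⟨b, hb⟩ := h a.toMul
    rw [Submodule.ideal_span_singleton_smul]
    exact ⟨Additive.ofMul b, trivial, (natCast_zsmul _ p).trans hb⟩
  obtain ⟨r, hr, hrA⟩ :=
    Submodule.exists_sub_one_mem_and_smul_eq_zero_of_fg_of_le_smul _ ⊤ hfg hdiv
  have hr₀ : r ≠ 0 := by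
    rintro rfl
    rw [Ideal.mem_span_singleton, zero_sub, dvd_neg] at hr
    exact hp (Nat.dvd_one.1 (by exact_mod_cast hr))
  exact CommGroup.finite_of_fg_isMulTorsion A fun a =>
    isOfFinOrder_iff_zpow_eq_one.2 ⟨r, hr₀, hrA (Additive.ofMul a) trivial⟩

variable {K p}

lemma sup_commPow_ne_of_relIndex_eq_zero [Group.FG K] {H : Subgroup F} (hcomm : ⁅K, K⁆ ≤ H)
    (hH : H.relIndex K = 0) (hp : p ≠ 1) : H ⊔ commPow K p ≠ K := by
  intro hK
  have hcomm' : commutator K ≤ H.subgroupOf K := by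
    rwa [Subgroup.subgroupOf, ← Subgroup.map_le_iff_le_comap, Subgroup.map_subtype_commutator]
  have : (H.subgroupOf K).Normal := Subgroup.Normal.of_commutator_le _ hcomm'
  have : IsMulCommutative (K ⧸ H.subgroupOf K) :=
    Subgroup.Normal.quotient_commutative_iff_commutator_le.2 hcomm'
  let χ : K →* K ⧸ H.subgroupOf K := QuotientGroup.mk' (H.subgroupOf K)
  have hle : H ⊔ commPow K p ≤ ((powMonoidHom p).range.comap χ).map K.subtype := by
    refine sup_le (fun x hx => ?_) (commPow_le_map_comap_range_powMonoidHom K p χ)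
    have hxK : x ∈ K := hK.le (Subgroup.mem_sup_left hx)
    have hχ : χ ⟨x, hxK⟩ = 1 := (QuotientGroup.eq_one_iff (⟨x, hxK⟩ : K)).2 hx
    exact ⟨⟨x, hxK⟩, ⟨1, (one_pow p).trans hχ.symm⟩, rfl⟩
  have hpow : Function.Surjective fun a : K ⧸ H.subgroupOf K => a ^ p := by
    intro a
    obtain ⟨x, rfl⟩ := QuotientGroup.mk'_surjective _ a
    obtain ⟨y, ⟨b, hb⟩, hyx⟩ := hle (hK.ge x.2)
    obtain rfl : y = x := Subtype.ext hyx
    exact ⟨b, hb⟩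
  have := finite_of_surjective_pow hp hpow
  exact Subgroup.index_ne_zero_of_finite hH

end CommPow

section RelationSubgroup

variable {n m : ℕ} {K : Subgroup (FreeGroup (Fin n))} [K.Normal] [K.FiniteIndex]
  {v : Fin m → FreeGroup (Fin n)}

open scoped IsMulCommutative in
lemma mul_card_normalClosure_ne_map_commPow_le
    (hv : Subgroup.normalClosure (Set.range v) ⊔ ⁅K, K⁆ = K) (p : ℕ) [hp : Fact p.Prime] :
    p * Nat.card {u : Fin m → FreeGroup (Fin n) ⧸ commPow K p //
        (∀ i, u i ∈ K.map (QuotientGroup.mk' (commPow K p))) ∧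
          Subgroup.normalClosure (Set.range u) ≠ K.map (QuotientGroup.mk' (commPow K p))} ≤
      Group.rank K * Nat.card (FreeGroup (Fin n) ⧸ commPow K p) ^ m := by
  have := finite_quotient_commPow K p hp.out.ne_zero
  set q := QuotientGroup.mk' (commPow K p)
  have : (K.map q).Normal := Subgroup.Normal.map inferInstance q (QuotientGroup.mk'_surjective _)
  let _ : Module (ZMod p) (Additive (K.map q)) :=
    AddCommGroup.zmodModule (map_commPow_pow_eq_one K p)
  have hgen : Subgroup.normalClosure (Set.range v) ⊔ commPow K p = K := by
    rw [← sup_eq_right.2 (commutator_le_commPow K p), ← sup_assoc, hv,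
      sup_eq_left.2 (commPow_le K p)]
  calc _ ≤ Group.rank (K.map q) * Nat.card (K.map q) ^ Nat.card (Fin m) :=
        mul_card_normalClosure_ne_le p (K.map q) ((normalClosure_map_eq_iff K p v).2 hgen)
    _ ≤ Group.rank K * Nat.card (FreeGroup (Fin n) ⧸ commPow K p) ^ m := by
        rw [Nat.card_fin]
        gcongr
        · exact Group.rank_le_of_surjective _ (q.subgroupMap_surjective K)
        · exact Subgroup.card_le_card_group _

lemma eventually_wordProb_normalClosure_sup_commPow_ne_le (hn : 2 ≤ n)
    (hv : Subgroup.normalClosure (Set.range v) ⊔ ⁅K, K⁆ = K) (p : ℕ) [hp : Fact p.Prime] :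
    ∀ᶠ l in atTop, wordProb n l m (fun R => (∀ i, R i ∈ K) ∧
      Subgroup.normalClosure (Set.range R) ⊔ commPow K p ≠ K) ≤
        Group.rank K * (4 * n + 1) ^ m / p := by
  have : NeZero n := ⟨by omega⟩
  have := finite_quotient_commPow K p hp.out.ne_zero
  let q := QuotientGroup.mk' (commPow K p)
  let P (u : Fin m → FreeGroup (Fin n) ⧸ commPow K p) : Prop :=
    (∀ i, u i ∈ K.map q) ∧ Subgroup.normalClosure (Set.range u) ≠ K.map q
  have hp₀ : (0 : ℝ) < p := by exact_mod_cast hp.out.pos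
  have hQ : (0 : ℝ) < Nat.card (FreeGroup (Fin n) ⧸ commPow K p) := by exact_mod_cast Nat.card_pos
  filter_upwards [eventually_card_fiber_le hn (QuotientGroup.mk'_surjective (commPow K p))]
    with l hl
  calc _ ≤ wordProb n l m (fun R => P (q ∘ R)) :=
        wordProb_le_of_imp_comp_castLE le_rfl fun R hR =>
          ⟨fun i => Subgroup.mem_map_of_mem q (hR.1 i),
            fun h => hR.2 ((normalClosure_map_eq_iff K p R).1 h)⟩
    _ ≤ Nat.card {u // P u} * ((4 * n + 1) / Nat.card (FreeGroup (Fin n) ⧸ commPow K p) : ℝ) ^ m :=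
        wordProb_comp_le q hl (by positivity) P
    _ ≤ Group.rank K * (4 * n + 1) ^ m / p := by
        rw [div_pow, mul_div_assoc', div_le_div_iff₀ (by positivity) hp₀]
        have hcard : (p * Nat.card {u // P u} : ℝ) ≤
            Group.rank K * Nat.card (FreeGroup (Fin n) ⧸ commPow K p) ^ m := by
          exact_mod_cast mul_card_normalClosure_ne_map_commPow_le hv p
        nlinarith [mul_le_mul_of_nonneg_right hcard (by positivity : (0 : ℝ) ≤ (4 * n + 1) ^ m)]

theorem tendsto_wordProb_relIndex_eq_zero (hn : 2 ≤ n)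
    (hv : Subgroup.normalClosure (Set.range v) ⊔ ⁅K, K⁆ = K) {ρ : ℕ → ℕ} (hρ : ∀ l, m ≤ ρ l) :
    Tendsto (fun l => wordProb n l (ρ l) fun R => (∀ i, R i ∈ K) ∧
      (Subgroup.normalClosure (Set.range R) ⊔ ⁅K, K⁆).relIndex K = 0) atTop (nhds 0) := by
  have : NeZero n := ⟨by omega⟩
  refine tendsto_order.2 ⟨fun a ha => .of_forall fun l => ha.trans_le (wordProb_nonneg _ _ _ _),
    fun ε hε => ?_⟩
  obtain ⟨N, hN⟩ := exists_nat_gt ((Group.rank K * (4 * n + 1) ^ m : ℝ) / ε)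
  obtain ⟨p, hNp, hp⟩ := Nat.exists_infinite_primes N
  have : Fact p.Prime := ⟨hp⟩
  have hbound : (Group.rank K * (4 * n + 1) ^ m : ℝ) / p < ε := by
    rw [div_lt_comm₀ (by exact_mod_cast hp.pos) hε]
    exact hN.trans_le (by exact_mod_cast hNp)
  filter_upwards [eventually_wordProb_normalClosure_sup_commPow_ne_le hn hv p] with l hl
  refine (wordProb_le_of_imp_comp_castLE (hρ l) fun R hR => ⟨fun i => hR.1 _, ?_⟩).trans_lt
    (hl.trans_lt hbound)
  have hle : Subgroup.normalClosure (Set.range (R ∘ Fin.castLE (hρ l))) ⊔ ⁅K, K⁆ ≤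
      Subgroup.normalClosure (Set.range R) ⊔ ⁅K, K⁆ :=
    sup_le_sup_right (Subgroup.normalClosure_mono (Set.range_comp_subset_range _ R)) _
  have hne := sup_commPow_ne_of_relIndex_eq_zero le_sup_right
    (Subgroup.relIndex_eq_zero_of_le_left hle hR.2) hp.ne_one
  rwa [sup_assoc, sup_eq_right.2 (commutator_le_commPow K p)] at hne

end RelationSubgroup

section Conclusion

lemma relIndex_ker_sup_commutator_comap_eq_zero {F G : Type*} [Group F] [Group G] {ψ : F →* G}
    (hψ : Function.Surjective ψ) (N : Subgroup G) [Infinite (Abelianization N)] :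
    (ψ.ker ⊔ ⁅N.comap ψ, N.comap ψ⁆).relIndex (N.comap ψ) = 0 := by
  let χ : N.comap ψ →* Abelianization N := Abelianization.of.comp (ψ.subgroupComap N)
  have hχ : Function.Surjective χ := QuotientGroup.mk_surjective.comp
    (ψ.subgroupComap_surjective_of_surjective N hψ)
  have hle : ψ.ker ⊔ ⁅N.comap ψ, N.comap ψ⁆ ≤ χ.ker.map (N.comap ψ).subtype := by
    refine sup_le (fun x hx => ?_) ?_
    · have hxN : ψ x ∈ N := by
        rw [MonoidHom.mem_ker.1 hx]
        exact one_mem N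
      have hx' : ψ.subgroupComap N ⟨x, hxN⟩ = 1 := Subtype.ext hx
      exact ⟨⟨x, hxN⟩, (congrArg Abelianization.of hx').trans (map_one _), rfl⟩
    · rw [← Subgroup.map_subtype_commutator]
      exact Subgroup.map_mono (Abelianization.commutator_subset_ker χ)
  refine Subgroup.relIndex_eq_zero_of_le_left hle ?_
  rw [Subgroup.relIndex, Subgroup.subgroupOf,
    Subgroup.comap_map_eq_self_of_injective (Subgroup.subtype_injective _), Subgroup.index_ker,
    MonoidHom.range_eq_top.2 hχ, Subgroup.card_top, Nat.card_eq_zero_of_infinite]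

lemma relIndex_normalClosure_sup_commutator_eq_zero {F G J : Type*} [Group F] [Group G] [Group J]
    {f : F →* J} {π : G →* J} [Infinite (Abelianization π.ker)] {S : Set F}
    {φ : F ⧸ Subgroup.normalClosure S →* G} (hφ : Function.Surjective φ)
    (hf : π.comp (φ.comp (QuotientGroup.mk' (Subgroup.normalClosure S))) = f) :
    S ⊆ f.ker ∧ (Subgroup.normalClosure S ⊔ ⁅f.ker, f.ker⁆).relIndex f.ker = 0 := by
  let ψ := φ.comp (QuotientGroup.mk' (Subgroup.normalClosure S))
  have hψ : Function.Surjective ψ := hφ.comp (QuotientGroup.mk'_surjective _)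
  have hker : f.ker = π.ker.comap ψ := by
    rw [MonoidHom.comap_ker, hf]
  have hS : Subgroup.normalClosure S ≤ ψ.ker := fun x hx =>
    (congrArg φ ((QuotientGroup.eq_one_iff x).2 hx)).trans (map_one φ)
  rw [hker]
  exact ⟨Subgroup.subset_normalClosure.trans (hS.trans (ψ.ker_le_comap π.ker)),
    Subgroup.relIndex_eq_zero_of_le_left (sup_le_sup_right hS _)
      (relIndex_ker_sup_commutator_comap_eq_zero hψ π.ker)⟩

lemma infinite_abelianization_of_mulEquiv_freeAbelianGroup {A ι : Type*} [Group A] [Nonempty ι]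
    (e : A ≃* Multiplicative (FreeAbelianGroup ι)) : Infinite (Abelianization A) :=
  .of_injective _ (e.abelianizationCongr.trans Abelianization.equivOfComm.symm).symm.injective

theorem random_group_no_fixed_virtually_abelian_quotient_general {n : ℕ} (hn : 2 ≤ n)
    {J : Type*} [Group J] {f : FreeGroup (Fin n) →* J} [f.ker.FiniteIndex] {m : ℕ}
    (hm : ∃ v : Fin m → FreeGroup (Fin n), GeneratesRelModule f v)
    {G : Type*} [Group G] (π : G →* J) [Infinite (Abelianization π.ker)]
    {ρ : ℕ → ℕ} (hρ : ∀ l, m ≤ ρ l) :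
    Tendsto (fun l => wordProb n l (ρ l) fun R =>
        ∃ φ : (FreeGroup (Fin n) ⧸ Subgroup.normalClosure (Set.range R)) →* G,
          Function.Surjective φ ∧
          π.comp (φ.comp (QuotientGroup.mk' (Subgroup.normalClosure (Set.range R)))) = f)
      atTop (nhds 0) := by
  obtain ⟨v, -, hv⟩ := hm
  have : NeZero n := ⟨by omega⟩
  refine squeeze_zero (fun _ => wordProb_nonneg _ _ _ _) (fun l => ?_)
    (tendsto_wordProb_relIndex_eq_zero hn hv hρ)
  refine wordProb_le_of_imp_comp_castLE le_rfl fun R ⟨φ, hφ, hf⟩ => ?_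
  obtain ⟨hR, hindex⟩ := relIndex_normalClosure_sup_commutator_eq_zero hφ hf
  exact ⟨fun i => hR (Set.mem_range_self i), hindex⟩

end Conclusion

/-- Let `J` be a finite group, `f : F → J` a surjection from the free group on `n` generators
with kernel `K`, and let `m = d_F(K; ℤ)` be the minimal number of elements of `K` whose images
generate `K^{ab}` as a `J`-module.  Let `G` be an extension of `J` by a nontrivial free abelian
group `A = ker (G → J)`.  Then the probability that the random group on at least `m` relators of
length `l` admits a surjection onto `G` carrying `f` tends to `0` as `l → ∞`. -/
theorem random_group_no_fixed_virtually_abelian_quotient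
    (n : ℕ) (hn : 2 ≤ n) (J : Type*) [Group J] [Finite J]
    (f : FreeGroup (Fin n) →* J) (hf : Function.Surjective f)
    (m : ℕ) (hm : IsLeast {k | ∃ v : Fin k → FreeGroup (Fin n), GeneratesRelModule f v} m)
    (G : Type*) [Group G] (π : G →* J) (hπ : Function.Surjective π)
    (ι : Type*) [Nonempty ι]
    (hA : Nonempty ((π.ker : Subgroup G) ≃* Multiplicative (FreeAbelianGroup ι)))
    (ρ : ℕ → ℕ) (hρ : ∀ l, m ≤ ρ l) :
    Tendsto (fun l => wordProb n l (ρ l) fun R =>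
        ∃ φ : (FreeGroup (Fin n) ⧸ Subgroup.normalClosure (Set.range R)) →* G,
          Function.Surjective φ ∧
          π.comp (φ.comp (QuotientGroup.mk' (Subgroup.normalClosure (Set.range R)))) = f)
      atTop (nhds 0) := by
  obtain ⟨e⟩ := hA
  have := infinite_abelianization_of_mulEquiv_freeAbelianGroup e
  exact random_group_no_fixed_virtually_abelian_quotient_general hn hm.1 π hρ
end

section
/- Let G be a finite group and X → G a function whose image generates G. Suppose there is no subgroup H ≤ G of index 2 with x_i ∉ H for all i ∈ {1,…,n}. Then for every g ∈ G, the proportion |{w ∈ S_l : w =_G g}| / |S_l| of reduced words of length l evaluating to g converges to 1/|G| as l → ∞. -/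
open Filter

/-- Words in the alphabet `X ∪ X⁻¹` with `X = {x_1, …, x_n}` are lists of letters `(i, b)`,
the letter being `x_i` if `b = true` and `x_i⁻¹` if `b = false`.  `evalWord φ w` is the image
of the word `w` in `G` under the homomorphism `F(X) → G` induced by `φ : X → G`. -/
def evalWord {n : ℕ} {G : Type*} [Group G] (φ : Fin n → G) (w : List (Fin n × Bool)) : G :=
  FreeGroup.lift φ (FreeGroup.mk w)

/-!
Let `c l a g` be the number of reduced words of length `l + 1` with first letter `a` and value `g`,
divided by `(d - 1) ^ l`, where `d` is the number of letters. Prepending a letter other than the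
inverse of the first one is the composition of a permutation with `(J - 1) / (d - 1)`, applied to
the `d` numbers `c l · g`, where `J` is the all-ones matrix. This contracts everything orthogonal to
the constants, so the energy `∑ a, ∑ g, c l a g ^ 2` decreases by a fixed multiple of the variances
of the `c l · g`. These variances therefore tend to `0`. For the totals `m l g = ∑ a, c l a g` this
gives `m (l + 1) (s a * g) - m l g → 0` for every letter `a` with value `s a`; hence `m l` is
asymptotically invariant under all quotients `s a / s b`. When these generate `G`, the limit is
uniform; when they do not, they generate a subgroup of index two that contains no `s a`.
-/

open Topology
open scoped Pointwise

section Sums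

lemma card_mul_sum_sum_sub_sq {ι R : Type*} [Fintype ι] [CommRing R] (c : ι → R) :
    (Fintype.card ι : R) * ∑ i, (∑ j, c j - c i) ^ 2 =
      Fintype.card ι * (Fintype.card ι - 1) ^ 2 * ∑ i, c i ^ 2 -
        (Fintype.card ι - 2) * ∑ i, (Fintype.card ι * c i - ∑ j, c j) ^ 2 := by
  simp only [sub_sq, mul_pow, mul_assoc, Finset.sum_add_distrib, Finset.sum_sub_distrib,
    Finset.sum_const, Finset.card_univ, nsmul_eq_mul, ← Finset.mul_sum, ← Finset.sum_mul]
  ring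

lemma sum_sum_apply_mul_left {ι G M : Type*} [Fintype ι] [Group G] [Fintype G] [AddCommMonoid M]
    (s : ι → G) (f : ι → G → M) : ∑ i, ∑ g, f i (s i * g) = ∑ i, ∑ g, f i g :=
  Finset.sum_congr rfl fun i _ => Equiv.sum_comp (Equiv.mulLeft (s i)) (f i)

end Sums

section Groups

variable {G : Type*} [Group G]

lemma index_eq_two_of_div_subset {T : Set G} (hinv : T⁻¹ = T) (hgen : Subgroup.closure T = ⊤)
    {H : Subgroup G} (hH : T / T ⊆ H) {t : G} (ht : t ∈ T) (htH : t ∉ H) : H.index = 2 := by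
  have mul_mem {u v : G} (hu : u ∈ T) (hv : v ∈ T) : u * v ∈ H := by
    rw [← div_inv_eq_mul]
    exact hH (Set.div_mem_div hu (hinv ▸ Set.inv_mem_inv.2 hv))
  have mem_or (x : G) : x ∈ H ∨ ∀ u ∈ T, u * x ∈ H := by
    have step {v y : G} (hv : v ∈ T) (hy : y ∈ H ∨ ∀ u ∈ T, u * y ∈ H) :
        v * y ∈ H ∨ ∀ u ∈ T, u * (v * y) ∈ H := by
      refine hy.symm.imp (fun hy => hy v hv) fun hy u hu => ?_
      rw [← mul_assoc]
      exact H.mul_mem (mul_mem hu hv) hy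
    induction (hgen ▸ Subgroup.mem_top x : x ∈ Subgroup.closure T)
      using Subgroup.closure_induction_left with
    | one => exact Or.inl H.one_mem
    | mul_left v hv y _ hy => exact step hv hy
    | inv_mul_cancel v hv y _ hy => exact step (hinv ▸ Set.inv_mem_inv.2 hv) hy
  refine Subgroup.index_eq_two_iff'.2 ⟨t, fun x => ?_⟩
  by_cases hx : x ∈ H
  · exact Or.inr ⟨hx, fun h => htH ((H.mul_mem_cancel_right hx).1 h)⟩
  · exact Or.inl ⟨(mem_or x).resolve_left hx t ht, hx⟩

lemma closure_div_eq_top {T : Set G} (hinv : T⁻¹ = T) (hgen : Subgroup.closure T = ⊤)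
    (hindex : ¬ ∃ H : Subgroup G, H.index = 2 ∧ ∀ t ∈ T, t ∉ H) :
    Subgroup.closure (T / T) = ⊤ := by
  by_contra hne
  have not_mem : ∀ t ∈ T, t ∉ Subgroup.closure (T / T) := fun t ht htH => by
    refine hne (top_le_iff.1 (hgen ▸ (Subgroup.closure_le _).2 fun u hu => ?_))
    rw [← div_mul_cancel u t]
    exact mul_mem (Subgroup.subset_closure (Set.div_mem_div hu ht)) htH
  obtain ⟨t, ht⟩ : T.Nonempty := Set.nonempty_iff_ne_empty.2 fun hT =>
    hne (by rw [hT, Set.empty_div, ← hT, hgen])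
  exact hindex ⟨_, index_eq_two_of_div_subset hinv hgen Subgroup.subset_closure ht (not_mem t ht),
    not_mem⟩

/-- The subgroup of those `k` for which left translation by `k` changes the functions `m l` by an
amount tending to `0` pointwise as `l → ∞`. -/
def asymptoticStabilizer (m : ℕ → G → ℝ) : Subgroup G where
  carrier := {k | ∀ g, Tendsto (fun l => m l (k * g) - m l g) atTop (𝓝 0)}
  mul_mem' {a b} ha hb g := by
    simpa [mul_assoc] using (ha (b * g)).add (hb g)
  one_mem' g := by simp
  inv_mem' {a} ha g := by
    simpa using (ha (a⁻¹ * g)).neg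

lemma div_mem_asymptoticStabilizer {m : ℕ → G → ℝ} {s t : G}
    (hs : ∀ g, Tendsto (fun l => m (l + 1) (s * g) - m l g) atTop (𝓝 0))
    (ht : ∀ g, Tendsto (fun l => m (l + 1) (t * g) - m l g) atTop (𝓝 0)) :
    s / t ∈ asymptoticStabilizer m := fun g => by
  rw [← tendsto_add_atTop_iff_nat 1]
  simpa [div_eq_mul_inv, mul_assoc] using (hs (t⁻¹ * g)).sub (ht (t⁻¹ * g))

lemma tendsto_of_asymptoticStabilizer_eq_top [Fintype G] {m : ℕ → G → ℝ}
    (hm : asymptoticStabilizer m = ⊤) {M : ℝ} (hM : ∀ l, ∑ g, m l g = M) (g : G) :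
    Tendsto (fun l => m l g) atTop (𝓝 (M / Fintype.card G)) := by
  have diff (h : G) : Tendsto (fun l => m l g - m l h) atTop (𝓝 0) := by
    have mem : g / h ∈ asymptoticStabilizer m := hm ▸ Subgroup.mem_top _
    simpa only [div_mul_cancel] using mem h
  have deviation := (tendsto_finsetSum Finset.univ fun h _ => diff h).div_const (Fintype.card G : ℝ)
  have card_ne_zero : (Fintype.card G : ℝ) ≠ 0 := by exact_mod_cast Fintype.card_ne_zero
  convert deviation.add_const (M / Fintype.card G) using 2 with l
  · rw [Finset.sum_sub_distrib, hM, Finset.sum_const, Finset.card_univ, nsmul_eq_mul]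
    field_simp
    ring
  · simp

end Groups

section Flow

variable {A G : Type*} [Fintype A] [Group G]

/-- The recurrence satisfied by the normalized numbers `c l a g` of words of length `l + 1` with
first letter `a` and value `g`, for words in which no letter `a` is followed by `σ a`. The
normalization `(|A| - 1) ^ l` makes the total mass constant. -/
def IsNonbacktrackingFlow (σ : Equiv.Perm A) (s : A → G) (c : ℕ → A → G → ℝ) : Prop :=
  ∀ l a g, (Fintype.card A - 1) * c (l + 1) a (s a * g) = ∑ b, c l b g - c l (σ a) g

namespace IsNonbacktrackingFlow

variable {σ : Equiv.Perm A} {s : A → G} {c : ℕ → A → G → ℝ}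

lemma sum_eq [Fintype G] (hc : IsNonbacktrackingFlow σ s c) (hA : Fintype.card A ≠ 1) (l : ℕ) :
    ∑ g, ∑ a, c l a g = ∑ g, ∑ a, c 0 a g := by
  induction l with
  | zero => rfl
  | succ l ih =>
    have hA' : (Fintype.card A - 1 : ℝ) ≠ 0 := sub_ne_zero.2 (by exact_mod_cast hA)
    rw [← ih, ← mul_right_inj' hA']
    calc (Fintype.card A - 1 : ℝ) * ∑ g, ∑ a, c (l + 1) a g
        = ∑ g, ∑ a, (Fintype.card A - 1) * c (l + 1) a (s a * g) := by
          simp only [← Finset.mul_sum]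
          rw [Finset.sum_comm, ← sum_sum_apply_mul_left s, Finset.sum_comm]
      _ = ∑ g, (∑ _a : A, ∑ b, c l b g - ∑ a, c l a g) := by
          refine Finset.sum_congr rfl fun g _ => ?_
          rw [Finset.sum_congr rfl fun a _ => hc l a g, Finset.sum_sub_distrib,
            Equiv.sum_comp σ fun a => c l a g]
      _ = (Fintype.card A - 1) * ∑ g, ∑ a, c l a g := by
          simp only [Finset.sum_const, Finset.card_univ, nsmul_eq_mul, Finset.mul_sum,
            sub_mul, one_mul, Finset.sum_sub_distrib]

lemma energy_succ [Fintype G] (hc : IsNonbacktrackingFlow σ s c) (l : ℕ) :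
    (Fintype.card A : ℝ) * (Fintype.card A - 1) ^ 2 * ∑ g, ∑ a, c (l + 1) a g ^ 2 =
      Fintype.card A * (Fintype.card A - 1) ^ 2 * ∑ g, ∑ a, c l a g ^ 2 -
        (Fintype.card A - 2) * ∑ g, ∑ a, (Fintype.card A * c l a g - ∑ b, c l b g) ^ 2 := by
  calc (Fintype.card A : ℝ) * (Fintype.card A - 1) ^ 2 * ∑ g, ∑ a, c (l + 1) a g ^ 2
      = Fintype.card A * ∑ g, ∑ a, ((Fintype.card A - 1) * c (l + 1) a (s a * g)) ^ 2 := by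
        simp only [mul_pow, ← Finset.mul_sum]
        rw [Finset.sum_comm, ← sum_sum_apply_mul_left s, Finset.sum_comm, mul_assoc]
    _ = ∑ g, Fintype.card A * ∑ a, (∑ b, c l b g - c l a g) ^ 2 := by
        rw [Finset.mul_sum]
        refine Finset.sum_congr rfl fun g _ => congrArg _ ?_
        rw [← Equiv.sum_comp σ fun a => (∑ b, c l b g - c l a g) ^ 2]
        exact Finset.sum_congr rfl fun a _ => by rw [hc]
    _ = _ := by
        rw [Finset.sum_congr rfl fun g _ => card_mul_sum_sum_sub_sq fun a => c l a g,
          Finset.sum_sub_distrib, ← Finset.mul_sum, ← Finset.mul_sum]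

lemma tendsto_variance [Fintype G] (hc : IsNonbacktrackingFlow σ s c)
    (hA : 2 < Fintype.card A) :
    Tendsto (fun l => ∑ g, ∑ a, (Fintype.card A * c l a g - ∑ b, c l b g) ^ 2) atTop (𝓝 0) := by
  have hA' : (2 : ℝ) < Fintype.card A := by exact_mod_cast hA
  have hd : (0 : ℝ) < Fintype.card A - 2 := sub_pos.2 hA'
  let E (l : ℕ) : ℝ :=
    Fintype.card A * (Fintype.card A - 1) ^ 2 * ∑ g, ∑ a, c l a g ^ 2
  have hE (l : ℕ) : (Fintype.card A - 2) *
      ∑ g, ∑ a, (Fintype.card A * c l a g - ∑ b, c l b g) ^ 2 = E l - E (l + 1) := by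
    rw [show E (l + 1) = _ from hc.energy_succ l]
    simp only [E, sub_sub_cancel]
  have antitone : Antitone E := antitone_nat_of_succ_le fun l => sub_nonneg.1 (hE l ▸ by positivity)
  have bddBelow : BddBelow (Set.range E) := ⟨0, Set.forall_mem_range.2 fun l => by positivity⟩
  have hlim := tendsto_atTop_ciInf antitone bddBelow
  have hsub := (hlim.sub (hlim.comp (tendsto_add_atTop_nat 1))).const_mul (Fintype.card A - 2 : ℝ)⁻¹
  rw [sub_self, mul_zero] at hsub
  exact hsub.congr fun l => by rw [Function.comp_apply, ← hE, inv_mul_cancel_left₀ hd.ne']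

lemma tendsto_card_mul_sub_sum [Finite G] (hc : IsNonbacktrackingFlow σ s c)
    (hA : 2 < Fintype.card A) (a : A) (g : G) :
    Tendsto (fun l => Fintype.card A * c l a g - ∑ b, c l b g) atTop (𝓝 0) := by
  have := Fintype.ofFinite G
  have hsq : Tendsto (fun l => (Fintype.card A * c l a g - ∑ b, c l b g) ^ 2) atTop (𝓝 0) := by
    refine squeeze_zero (fun l => sq_nonneg _) (fun l => ?_) (hc.tendsto_variance hA)
    calc (Fintype.card A * c l a g - ∑ b, c l b g) ^ 2
        ≤ ∑ a, (Fintype.card A * c l a g - ∑ b, c l b g) ^ 2 :=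
          Finset.single_le_sum (f := fun a => (Fintype.card A * c l a g - ∑ b, c l b g) ^ 2)
            (fun _ _ => sq_nonneg _) (Finset.mem_univ a)
      _ ≤ ∑ g, ∑ a, (Fintype.card A * c l a g - ∑ b, c l b g) ^ 2 :=
          Finset.single_le_sum
            (f := fun g => ∑ a, (Fintype.card A * c l a g - ∑ b, c l b g) ^ 2)
            (fun _ _ => Finset.sum_nonneg fun _ _ => sq_nonneg _) (Finset.mem_univ g)
  rw [tendsto_zero_iff_abs_tendsto_zero]
  simpa [Function.comp_def, Real.sqrt_sq_eq_abs] using hsq.sqrt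

lemma tendsto_sum_succ_sub_sum [Finite G] (hc : IsNonbacktrackingFlow σ s c)
    (hA : 2 < Fintype.card A) (a : A) (g : G) :
    Tendsto (fun l => ∑ b, c (l + 1) b (s a * g) - ∑ b, c l b g) atTop (𝓝 0) := by
  have hA' : (Fintype.card A - 1 : ℝ) ≠ 0 := sub_ne_zero.2 (by exact_mod_cast (by omega))
  have current := (hc.tendsto_card_mul_sub_sum hA (σ a) g).const_mul (Fintype.card A - 1 : ℝ)⁻¹
  have following := (tendsto_add_atTop_iff_nat 1).2 (hc.tendsto_card_mul_sub_sum hA a (s a * g))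
  have hsum := (current.add following).neg
  simp only [mul_zero, add_zero, neg_zero] at hsum
  refine hsum.congr fun l => ?_
  field_simp
  linear_combination -(Fintype.card A : ℝ) * hc l a g

theorem tendsto_sum [Fintype G] (hc : IsNonbacktrackingFlow σ s c)
    (hA : 2 < Fintype.card A) (hs : Subgroup.closure (Set.range s / Set.range s) = ⊤) (g : G) :
    Tendsto (fun l => ∑ a, c l a g) atTop (𝓝 ((∑ h, ∑ a, c 0 a h) / Fintype.card G)) := by
  refine tendsto_of_asymptoticStabilizer_eq_top (top_le_iff.1 (hs ▸ (Subgroup.closure_le _).2 ?_))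
    (hc.sum_eq (by omega)) g
  rintro _ ⟨_, ⟨a, rfl⟩, _, ⟨b, rfl⟩, rfl⟩
  exact div_mem_asymptoticStabilizer (hc.tendsto_sum_succ_sub_sum hA a)
    (hc.tendsto_sum_succ_sub_sum hA b)

end IsNonbacktrackingFlow

end Flow

section Counting

lemma card_list_length_succ {A : Type*} [Fintype A] (l : ℕ) (p : List A → Prop) :
    Nat.card {w : List A // w.length = l + 1 ∧ p w} =
      ∑ a, Nat.card {w : List A // w.length = l ∧ p (a :: w)} := by
  have (a : A) : Finite {w : List A // w.length = l ∧ p (a :: w)} :=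
    ((List.finite_length_eq A l).subset fun _ h => h.1).to_subtype
  rw [← Nat.card_sigma]
  exact Nat.card_congr
    { toFun := fun
        | ⟨a :: w, hw⟩ => ⟨a, w, by simpa using hw⟩
      invFun := fun ⟨a, w, hw⟩ => ⟨a :: w, by simpa using hw⟩
      left_inv := fun
        | ⟨_ :: _, _⟩ => rfl
      right_inv := fun _ => rfl }

lemma card_subtype_eq_sum_card_fiber {ι κ : Type*} [Fintype κ] (p : ι → Prop) [Finite {x // p x}]
    (f : ι → κ) : Nat.card {x // p x} = ∑ k, Nat.card {x // p x ∧ f x = k} := by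
  rw [← Nat.card_congr (Equiv.sigmaFiberEquiv fun x : {x // p x} => f x), Nat.card_sigma]
  exact Finset.sum_congr rfl fun k _ =>
    Nat.card_congr (Equiv.subtypeSubtypeEquivSubtypeInter p fun x => f x = k)

variable {A G : Type*} (σ : Equiv.Perm A)

/-- The words in which no letter `a` is followed by `σ a`. Reduced words are the case where `σ`
exchanges each letter with its inverse. -/
def IsNonbacktracking (w : List A) : Prop := w.IsChain fun a b => b ≠ σ a

lemma finite_nonbacktracking [Finite A] (l : ℕ) :
    Finite {w : List A // IsNonbacktracking σ w ∧ w.length = l} :=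
  ((List.finite_length_eq A l).subset fun _ h => h.2).to_subtype

variable [Group G] (s : A → G)

/-- The number of nonbacktracking words of length `l + 1` with first letter `a` and value `g`; the
list `w` is the word without its first letter. -/
noncomputable def nonbacktrackingCount (l : ℕ) (a : A) (g : G) : ℕ :=
  Nat.card {w : List A // w.length = l ∧ IsNonbacktracking σ (a :: w) ∧ ((a :: w).map s).prod = g}

variable [Fintype A]

lemma card_nonbacktracking_succ_eq_sum (l : ℕ) (g : G) :
    Nat.card {w : List A // IsNonbacktracking σ w ∧ w.length = l + 1 ∧ (w.map s).prod = g} =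
      ∑ a, nonbacktrackingCount σ s l a g := by
  simp only [and_left_comm (a := IsNonbacktracking σ _)]
  exact card_list_length_succ l fun w => IsNonbacktracking σ w ∧ (w.map s).prod = g

lemma nonbacktrackingCount_succ_add (l : ℕ) (a : A) (g : G) :
    nonbacktrackingCount σ s (l + 1) a (s a * g) + nonbacktrackingCount σ s l (σ a) g =
      ∑ b, nonbacktrackingCount σ s l b g := by
  classical
  have card_backtracking : Nat.card {w : List A // w.length = l ∧
      IsNonbacktracking σ (a :: σ a :: w) ∧ ((a :: σ a :: w).map s).prod = s a * g} = 0 := by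
    simp [IsNonbacktracking]
  rw [nonbacktrackingCount, card_list_length_succ,
    ← Finset.sum_erase_add _ _ (Finset.mem_univ (σ a)), card_backtracking, add_zero,
    ← Finset.sum_erase_add _ _ (Finset.mem_univ (σ a))]
  refine congrArg (· + _) (Finset.sum_congr rfl fun b hb => Nat.card_congr ?_)
  refine Equiv.subtypeEquivRight fun w => ?_
  simp [IsNonbacktracking, Finset.ne_of_mem_erase hb]

lemma isNonbacktrackingFlow_count (hA : Fintype.card A ≠ 1) :
    IsNonbacktrackingFlow σ s fun l a g =>
      (nonbacktrackingCount σ s l a g : ℝ) / (Fintype.card A - 1) ^ l := fun l a g => by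
  have hA' : (Fintype.card A - 1 : ℝ) ≠ 0 := sub_ne_zero.2 (by exact_mod_cast hA)
  have hcount : (nonbacktrackingCount σ s (l + 1) a (s a * g) : ℝ) +
      nonbacktrackingCount σ s l (σ a) g = ∑ b, (nonbacktrackingCount σ s l b g : ℝ) :=
    mod_cast nonbacktrackingCount_succ_add σ s l a g
  rw [← Finset.sum_div, ← sub_div, ← hcount, add_sub_cancel_right]
  field_simp
  ring

lemma card_nonbacktracking_succ [Fintype G] (l : ℕ) :
    Nat.card {w : List A // IsNonbacktracking σ w ∧ w.length = l + 1} =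
      ∑ g, ∑ a, nonbacktrackingCount σ s l a g := by
  have := finite_nonbacktracking σ (l + 1)
  rw [card_subtype_eq_sum_card_fiber _ fun w => (w.map s).prod]
  simp only [and_assoc, card_nonbacktracking_succ_eq_sum]

lemma sum_nonbacktrackingCount_zero_ne_zero [Nonempty A] [Fintype G] :
    ∑ g, ∑ a, nonbacktrackingCount σ s 0 a g ≠ 0 := by
  rw [← card_nonbacktracking_succ]
  have := finite_nonbacktracking σ 1
  have : Nonempty {w : List A // IsNonbacktracking σ w ∧ w.length = 0 + 1} :=
    (inferInstance : Nonempty A).map fun a => ⟨[a], List.isChain_singleton a, rfl⟩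
  exact Nat.card_pos.ne'

end Counting

theorem nonbacktracking_walk_equidistribution_aperiodic_general
    {A G : Type*} [Fintype A] [Group G] [Finite G] (hA : 2 < Fintype.card A) (σ : Equiv.Perm A)
    (s : A → G) (hs : Subgroup.closure (Set.range s / Set.range s) = ⊤) (g : G) :
    Tendsto (fun l =>
        (Nat.card {w : List A //
            IsNonbacktracking σ w ∧ w.length = l ∧ (w.map s).prod = g} : ℝ) /
          (Nat.card {w : List A // IsNonbacktracking σ w ∧ w.length = l} : ℝ))
      atTop (𝓝 (1 / (Nat.card G : ℝ))) := by
  have := Fintype.ofFinite G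
  rw [Nat.card_eq_fintype_card]
  have : Nonempty A := Fintype.card_pos_iff.1 (by omega)
  have hA' : (Fintype.card A - 1 : ℝ) ≠ 0 := sub_ne_zero.2 (by exact_mod_cast (by omega))
  have flow := isNonbacktrackingFlow_count σ s (by omega)
  have total (l : ℕ) := flow.sum_eq (by omega) l
  have limit := flow.tendsto_sum hA hs g
  simp only [← Finset.sum_div, pow_zero, div_one] at total limit
  have total_ne_zero : ∑ h, ∑ a, (nonbacktrackingCount σ s 0 a h : ℝ) ≠ 0 :=
    mod_cast sum_nonbacktrackingCount_zero_ne_zero σ s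
  have ratio := limit.div_const (∑ h, ∑ a, (nonbacktrackingCount σ s 0 a h : ℝ))
  rw [div_right_comm, div_self total_ne_zero] at ratio
  refine (tendsto_add_atTop_iff_nat 1).1 (ratio.congr fun l => ?_)
  rw [card_nonbacktracking_succ_eq_sum, card_nonbacktracking_succ σ s, ← total l,
    div_div_div_cancel_right₀ (pow_ne_zero l hA')]
  push_cast
  rfl

section FreeGroup

variable {α : Type*}

/-- The exchange of each letter with its inverse. -/
def invLetter : Equiv.Perm (α × Bool) := (Equiv.refl α).prodCongr Equiv.boolNot

lemma isNonbacktracking_invLetter_iff [DecidableEq α] {w : List (α × Bool)} :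
    IsNonbacktracking invLetter w ↔ FreeGroup.reduce w = w := by
  rw [← FreeGroup.isReduced_iff_reduce_eq, FreeGroup.IsReduced, IsNonbacktracking]
  refine iff_of_eq (congrArg (List.IsChain · w) (funext₂ fun a b => propext ?_))
  obtain ⟨i, _ | _⟩ := a <;> obtain ⟨j, _ | _⟩ := b <;> simp [invLetter, eq_comm]

variable {G : Type*} [Group G]

/-- The value in `G` of a letter of the free group under the homomorphism induced by `φ`. -/
def letterValue (φ : α → G) (a : α × Bool) : G := cond a.2 (φ a.1) (φ a.1)⁻¹

lemma letterValue_invLetter (φ : α → G) (a : α × Bool) :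
    letterValue φ (invLetter a) = (letterValue φ a)⁻¹ := by
  obtain ⟨i, _ | _⟩ := a <;> simp [letterValue, invLetter]

lemma inv_range_letterValue (φ : α → G) :
    (Set.range (letterValue φ))⁻¹ = Set.range (letterValue φ) := by
  rw [Set.inv_range, ← invLetter.surjective.range_comp (letterValue φ)]
  exact congrArg Set.range (funext fun a => (letterValue_invLetter φ a).symm)

lemma closure_range_letterValue_div_eq_top {φ : α → G}
    (hgen : Subgroup.closure (Set.range φ) = ⊤)
    (hindex : ¬ ∃ H : Subgroup G, H.index = 2 ∧ ∀ i, φ i ∉ H) :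
    Subgroup.closure (Set.range (letterValue φ) / Set.range (letterValue φ)) = ⊤ := by
  have range_subset : Set.range φ ⊆ Set.range (letterValue φ) :=
    Set.range_subset_iff.2 fun i => ⟨(i, true), rfl⟩
  refine closure_div_eq_top (inv_range_letterValue φ)
    (top_le_iff.1 (hgen ▸ Subgroup.closure_mono range_subset)) ?_
  rintro ⟨H, hH, avoids⟩
  exact hindex ⟨H, hH, fun i => avoids _ (range_subset ⟨i, rfl⟩)⟩

lemma evalWord_eq_prod {n : ℕ} (φ : Fin n → G) (w : List (Fin n × Bool)) :
    evalWord φ w = (w.map (letterValue φ)).prod :=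
  FreeGroup.lift_mk

end FreeGroup

/-- Let `G` be a finite group and `φ : X → G` a function whose image generates `G`.  If there is
no index-2 subgroup `H ≤ G` avoiding all the `φ x_i`, then for every `g ∈ G` the proportion of
reduced words of length `l` that evaluate to `g` in `G` converges to `1/|G|` as `l → ∞`. -/
theorem nonbacktracking_walk_equidistribution_aperiodic
    (n : ℕ) (hn : 2 ≤ n) (G : Type*) [Group G] [Finite G]
    (φ : Fin n → G) (hgen : Subgroup.closure (Set.range φ) = ⊤)
    (hnoH : ¬ ∃ H : Subgroup G, H.index = 2 ∧ ∀ i, φ i ∉ H)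
    (g : G) :
    Tendsto (fun l =>
        (Nat.card {w : List (Fin n × Bool) //
            FreeGroup.reduce w = w ∧ w.length = l ∧ evalWord φ w = g} : ℝ) /
          (Nat.card {w : List (Fin n × Bool) //
            FreeGroup.reduce w = w ∧ w.length = l} : ℝ))
      atTop (nhds (1 / (Nat.card G : ℝ))) := by
  have hA : 2 < Fintype.card (Fin n × Bool) := by
    simp only [Fintype.card_prod, Fintype.card_fin, Fintype.card_bool]
    omega
  simpa only [isNonbacktracking_invLetter_iff, ← evalWord_eq_prod] using
    nonbacktracking_walk_equidistribution_aperiodic_general hA invLetter (letterValue φ)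
      (closure_range_letterValue_div_eq_top hgen hnoH) g
end
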